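/- Fix real numbers v, w, s, t, m, ρ with w > 0, s < t, m > 0 and ρ > 0. For each positive integer N with 4N > max(m, ρ), let q = q_N = exp(−2/√N), θ_m = arccos(1 − m/(2N)) and θ_ρ = arccos(1 − ρ/(2N)). Then the limit as N → ∞ of [ (q;q)_∞ (−q^{v+w+s};q)_∞ (q^{t−s};q)_∞ · ∏_{σ∈{+1,−1}} (q^{v+t/2} e^{σiθ_ρ};q)_∞ (−q^{w+t/2} e^{σiθ_ρ};q)_∞ · (e^{2iθ_m};q)_∞ (e^{−2iθ_m};q)_∞ ] / [ 4πN √(m/N) · (−q^{v+w+t};q)_∞ · ∏_{σ∈{+1,−1}} (q^{v+s/2} e^{σiθ_m};q)_∞ (−q^{w+s/2} e^{σiθ_m};q)_∞ · ∏_{σ∈{+1,−1}} (q^{(t−s)/2} e^{σi(θ_ρ+θ_m)};q)_∞ (q^{(t−s)/2} e^{σi(θ_ρ−θ_m)};q)_∞ ] exists and equals |Γ(v+s/2+i√m/2)|² · |Γ((t−s)/2 + i(√ρ+√m)/2)|² · |Γ((t−s)/2 + i(√ρ−√m)/2)|² / ( 8π √m · Γ(t−s) · |Γ(v+t/2+i√ρ/2)|²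 · |Γ(i√m)|² ). -/

import Mathlib

open Filter

/-- Infinite q-Pochhammer symbol `(a;q)_∞ = ∏_{k=0}^∞ (1 - a q^k)` for complex `a, q`. -/
noncomputable def qPochInf (a q : ℂ) : ℂ := ∏' k : ℕ, (1 - a * q ^ k)

/-- Weak asymmetry scaling `q_N = exp(-2/√N)`. -/
noncomputable def qN (N : ℕ) : ℝ := Real.exp (-2 / Real.sqrt N)

/-- Real powers of `q_N`: `q_N^x = exp(-2x/√N)`, as a complex number. -/
noncomputable def qpow (N : ℕ) (x : ℝ) : ℂ := Complex.ofReal (Real.exp (-2 * x / Real.sqrt N))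

/-- `e^{ix}` for real `x`. -/
noncomputable def eI (x : ℝ) : ℂ := Complex.exp (Complex.I * x)

/-- `|Γ(a+ib)|² := Γ(a+ib)·Γ(a−ib)` for real `a, b`. -/
noncomputable def GammaSq (a b : ℝ) : ℂ :=
  Complex.Gamma ((a : ℂ) + (b : ℂ) * Complex.I) * Complex.Gamma ((a : ℂ) - (b : ℂ) * Complex.I)

open Topology

lemma aux_exp2 (z : ℂ) : ‖Complex.exp z - 1 - z‖ ≤ ‖z‖ ^ 2 * Real.exp ‖z‖ := by
  have := Complex.norm_exp_sub_sum_le_norm_mul_exp z 2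
  simpa [Finset.sum_range_succ, sub_sub] using this

lemma aux_exp1 (z : ℂ) : ‖Complex.exp z - 1‖ ≤ ‖z‖ * Real.exp ‖z‖ := by
  have := Complex.norm_exp_sub_sum_le_norm_mul_exp z 1
  simpa [Finset.sum_range_succ, sub_sub] using this

lemma aux_bound (R : ℝ) (hR : 0 ≤ R) : ∃ C : ℝ, 0 ≤ C ∧ ∀ (b d : ℝ) (x c : ℂ), -(1 / 2) ≤ b → b ≤ 1 →
    0 ≤ d → d ≤ 1 → ‖x‖ ≤ R → ‖c - x‖ ≤ R * d →
    ‖(1 + b * c) * Complex.exp (-x * (Real.log (1 + b) : ℝ)) - 1‖ ≤ C * (|b| * d + b ^ 2) := by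
  refine ⟨9 * R ^ 2 * Real.exp (3 * R) + 2 * R + 2 * R * (3 * R * Real.exp (3 * R)) + R,
    by positivity, ?_⟩
  intro b d x c hb hb1 hd hd1 hx hc
  set l := Real.log (1 + b) with hl
  have h1b : 0 < 1 + b := by linarith
  have hl1 : l ≤ b := by have := Real.log_le_sub_one_of_pos h1b; linarith
  have hl2 : b - 2 * b ^ 2 ≤ l := by
    have h := Real.one_sub_inv_le_log_of_pos h1b
    refine le_trans ?_ h
    have : 1 - (1 + b)⁻¹ - (b - 2 * b ^ 2) = b ^ 2 * (1 + 2 * b) / (1 + b) := by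
      field_simp; ring
    have h2 : 0 ≤ b ^ 2 * (1 + 2 * b) / (1 + b) := by
      apply div_nonneg _ h1b.le
      apply mul_nonneg (sq_nonneg _); linarith
    linarith
  have hbl : |b - l| ≤ 2 * b ^ 2 := by rw [abs_le]; constructor <;> nlinarith [sq_nonneg b]
  have habs : |b| ≤ 1 := by rw [abs_le]; constructor <;> linarith
  have hb2 : b ^ 2 ≤ |b| := by rw [← sq_abs]; nlinarith [abs_nonneg b]
  have hll : |l| ≤ 3 * |b| := by
    have : |l| ≤ |b| + |b - l| := by
      have := abs_sub b (b - l); simpa using this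
    linarith
  set z : ℂ := -x * (l : ℝ) with hz
  have hzn : ‖z‖ ≤ 3 * R * |b| := by
    rw [hz, norm_mul, norm_neg, Complex.norm_real, Real.norm_eq_abs]
    calc ‖x‖ * |l| ≤ R * (3 * |b|) := by gcongr
      _ = _ := by ring
  have hzn' : ‖z‖ ≤ 3 * R := hzn.trans (by nlinarith)
  have hE : Real.exp ‖z‖ ≤ Real.exp (3 * R) := Real.exp_le_exp.2 hzn'
  have e2 : ‖Complex.exp z - 1 - z‖ ≤ 9 * R ^ 2 * Real.exp (3 * R) * b ^ 2 := by
    refine (aux_exp2 z).trans ?_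
    calc ‖z‖ ^ 2 * Real.exp ‖z‖ ≤ (3 * R * |b|) ^ 2 * Real.exp (3 * R) := by gcongr
      _ = _ := by rw [mul_pow, sq_abs]; ring
  have e1 : ‖Complex.exp z - 1‖ ≤ 3 * R * Real.exp (3 * R) * |b| := by
    refine (aux_exp1 z).trans ?_
    calc ‖z‖ * Real.exp ‖z‖ ≤ (3 * R * |b|) * Real.exp (3 * R) := by gcongr
      _ = _ := by ring
  have hcn : ‖c‖ ≤ 2 * R := by
    have : ‖c‖ ≤ ‖c - x‖ + ‖x‖ := by simpa using norm_add_le (c - x) x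
    nlinarith
  have key : (1 + b * c) * Complex.exp z - 1 = (Complex.exp z - 1 - z) + x * ((b - l : ℝ) : ℂ)
      + (b : ℂ) * c * (Complex.exp z - 1) + b * (c - x) := by
    rw [hz]; push_cast; ring
  rw [key]
  have t2 : ‖x * ((b - l : ℝ) : ℂ)‖ ≤ R * (2 * b ^ 2) := by
    rw [norm_mul, Complex.norm_real, Real.norm_eq_abs]; gcongr
  have t3 : ‖(b : ℂ) * c * (Complex.exp z - 1)‖ ≤ |b| * (2 * R) * (3 * R * Real.exp (3 * R) * |b|) := by
    rw [norm_mul, norm_mul, Complex.norm_real, Real.norm_eq_abs]; gcongr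
  have t4 : ‖(b : ℂ) * (c - x)‖ ≤ |b| * (R * d) := by
    rw [norm_mul, Complex.norm_real, Real.norm_eq_abs]; gcongr
  have hsq : |b| * (2 * R) * (3 * R * Real.exp (3 * R) * |b|) = 2 * R * (3 * R * Real.exp (3 * R)) * b ^ 2 := by
    rw [← sq_abs b]; ring
  have hexp := Real.exp_pos (3 * R)
  have p1 : 0 ≤ 9 * R ^ 2 * Real.exp (3 * R) + 2 * R + 2 * R * (3 * R * Real.exp (3 * R)) := by positivity
  have p2 : 0 ≤ |b| * d := by positivity
  calc _ ≤ _ + _ + _ + _ := norm_add₄_le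
    _ ≤ 9 * R ^ 2 * Real.exp (3 * R) * b ^ 2 + R * (2 * b ^ 2)
        + 2 * R * (3 * R * Real.exp (3 * R)) * b ^ 2 + |b| * (R * d) := by
      rw [← hsq]; gcongr
    _ ≤ _ := by nlinarith [mul_nonneg p1 p2, mul_nonneg hR (sq_nonneg b)]

/-- `(1-q^X)/(1-q)` close to `X`. -/
lemma aux_c (R : ℝ) (hR : 0 ≤ R) : ∃ K : ℝ, R ≤ K ∧ ∀ (e : ℝ) (x : ℂ), 0 < e → e ≤ 1 / 2 → ‖x‖ ≤ R →
    ‖(1 - Complex.exp (-e * x)) / ((1 - Real.exp (-e) : ℝ) : ℂ) - x‖ ≤ K * (1 - Real.exp (-e)) := by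
  refine ⟨R + 4 * (R ^ 2 * Real.exp R + R), by nlinarith [mul_nonneg (sq_nonneg R) (Real.exp_pos R).le], ?_⟩
  intro e x he he1 hx
  set d := 1 - Real.exp (-e) with hd
  have hq := Real.norm_exp_sub_one_sub_id_le (x := -e) (by rw [Real.norm_eq_abs, abs_neg, abs_of_pos he]; linarith)
  rw [Real.norm_eq_abs, Real.norm_eq_abs, abs_neg, abs_of_pos he, abs_le] at hq
  have hd1 : e / 2 ≤ d := by nlinarith
  have hdpos : 0 < d := by linarith
  have hde : |e - d| ≤ e ^ 2 := by rw [abs_le]; constructor <;> linarith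
  have h2 := aux_exp2 (-e * x)
  have hn : ‖(-e : ℂ) * x‖ = e * ‖x‖ := by
    rw [norm_mul, norm_neg, Complex.norm_real, Real.norm_eq_abs, abs_of_pos he]
  rw [hn] at h2
  have hdc : (d : ℂ) ≠ 0 := by exact_mod_cast hdpos.ne'
  have key : (1 - Complex.exp (-e * x)) / (d : ℂ) - x
      = (-(Complex.exp (-e * x) - 1 - (-e * x)) + ((e - d : ℝ) : ℂ) * x) / (d : ℂ) := by
    field_simp; push_cast; ring
  rw [key, norm_div, Complex.norm_real, Real.norm_eq_abs, abs_of_pos hdpos, div_le_iff₀ hdpos]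
  have b1 : (e * ‖x‖) ^ 2 * Real.exp (e * ‖x‖) ≤ (e * R) ^ 2 * Real.exp R := by
    have : e * ‖x‖ ≤ R := by nlinarith [norm_nonneg x]
    gcongr
  have b2 : ‖((e - d : ℝ) : ℂ) * x‖ ≤ e ^ 2 * R := by
    rw [norm_mul, Complex.norm_real, Real.norm_eq_abs]; gcongr
  have e4 : e ^ 2 ≤ 4 * d ^ 2 := by nlinarith
  have p : 0 ≤ R ^ 2 * Real.exp R + R := by positivity
  calc _ ≤ _ + _ := norm_add_le _ _
    _ ≤ (e * R) ^ 2 * Real.exp R + e ^ 2 * R := by rw [norm_neg]; linarith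
    _ = e ^ 2 * (R ^ 2 * Real.exp R + R) := by ring
    _ ≤ 4 * d ^ 2 * (R ^ 2 * Real.exp R + R) := by gcongr
    _ ≤ _ := by nlinarith [mul_nonneg hR (sq_nonneg d)]

lemma aux_geom (r : ℝ) (h0 : 0 < r) (h1 : r < 1) (n : ℕ) : n * r ^ n * (1 - r) ≤ 1 - r ^ n := by
  have h := mul_neg_geom_sum r n
  rw [← h]
  rw [mul_comm ((n : ℝ) * r ^ n)]
  apply mul_le_mul_of_nonneg_left _ (by linarith)
  calc (n : ℝ) * r ^ n = ∑ i ∈ Finset.range n, r ^ n := by simp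
    _ ≤ _ := Finset.sum_le_sum fun i hi => pow_le_pow_of_le_one h0.le h1.le (Finset.mem_range.1 hi).le

lemma aux_geom2 (q : ℝ) (h0 : 0 < q) (h1 : q < 1) (n : ℕ) :
    (n : ℝ) ^ 2 * q ^ n * (1 - q) ^ 2 ≤ 4 * (1 - q ^ n) := by
  set r := Real.sqrt q with hr
  have hr0 : 0 < r := Real.sqrt_pos.2 h0
  have hrq : r ^ 2 = q := Real.sq_sqrt h0.le
  have hr1 : r < 1 := by nlinarith
  have h := aux_geom r hr0 hr1 n
  have hp0 : 0 < r ^ n := by positivity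
  have hp1 : r ^ n ≤ 1 := pow_le_one₀ hr0.le hr1.le
  have hqn : q ^ n = (r ^ n) ^ 2 := by rw [← hrq, ← pow_mul, ← pow_mul, mul_comm]
  have h' : (n * r ^ n * (1 - r)) ^ 2 ≤ (1 - r ^ n) ^ 2 := by
    have : 0 ≤ n * r ^ n * (1 - r) := mul_nonneg (by positivity) (by linarith)
    gcongr
  have h3 : (1 - q) ^ 2 ≤ 4 * (1 - r) ^ 2 := by
    have : (1 - q) ^ 2 = (1 + r) ^ 2 * (1 - r) ^ 2 := by rw [← hrq]; ring
    rw [this]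
    apply mul_le_mul_of_nonneg_right _ (sq_nonneg _)
    nlinarith
  calc (n : ℝ) ^ 2 * q ^ n * (1 - q) ^ 2 ≤ (n : ℝ) ^ 2 * q ^ n * (4 * (1 - r) ^ 2) := by gcongr
    _ = 4 * (n * r ^ n * (1 - r)) ^ 2 := by rw [hqn]; ring
    _ ≤ 4 * (1 - r ^ n) ^ 2 := by linarith
    _ ≤ _ := by rw [hqn]; nlinarith

/-- the parameter `b` -/
noncomputable def bq (σ q : ℝ) (k : ℕ) : ℝ := σ * q ^ (k + 1) * (1 - q) / (1 - σ * q ^ (k + 1))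

lemma bq_bounds (σ q : ℝ) (hσ : σ = 1 ∨ σ = -1) (h0 : 0 < q) (h1 : q < 1) (k : ℕ) :
    0 < 1 - σ * q ^ (k + 1) ∧
    -(1 / 2) ≤ bq σ q k ∧ bq σ q k ≤ 1 ∧
    |bq σ q k| * (1 - q) + (bq σ q k) ^ 2 ≤ 5 * (1 / ((k : ℝ) + 1) ^ 2) := by
  set u := q ^ (k + 1) with hu
  have hu0 : 0 < u := by positivity
  have hu1 : u < 1 := pow_lt_one₀ h0.le h1 (by omega)
  have g1 := aux_geom q h0 h1 (k + 1)
  have g2 := aux_geom2 q h0 h1 (k + 1)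
  rw [← hu] at g1 g2
  push_cast at g1 g2
  have hk : (0 : ℝ) < (k : ℝ) + 1 := by positivity
  have hpos : 0 < 1 - σ * u := by rcases hσ with rfl | rfl <;> linarith
  have hA : |bq σ q k| ≤ u * (1 - q) / (1 - u) := by
    unfold bq
    rw [← hu, abs_div, abs_mul, abs_mul, abs_of_pos hpos, abs_of_pos hu0, abs_of_pos (by linarith : 0 < 1 - q)]
    have : |σ| = 1 := by rcases hσ with rfl | rfl <;> simp
    rw [this, one_mul]
    apply div_le_div_of_nonneg_left
    · exact mul_nonneg hu0.le (by linarith)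
    · linarith
    · rcases hσ with rfl | rfl <;> linarith
  have hB : u * (1 - q) / (1 - u) ≤ 1 / ((k : ℝ) + 1) := by
    rw [div_le_div_iff₀ (by linarith) hk]; linarith
  have hB' : u * (1 - q) / (1 - u) * (1 - q) ≤ 4 * (1 / ((k : ℝ) + 1) ^ 2) := by
    rw [div_mul_eq_mul_div, mul_one_div, div_le_div_iff₀ (by linarith) (by positivity)]; linarith
  have hAB := hA.trans hB
  have hle1 : 1 / ((k : ℝ) + 1) ≤ 1 := by
    rw [div_le_one hk]; linarith [(Nat.cast_nonneg k : (0 : ℝ) ≤ k)]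
  refine ⟨hpos, ?_, ?_, ?_⟩
  · unfold bq
    rw [← hu, le_div_iff₀ hpos]
    rcases hσ with rfl | rfl <;> nlinarith
  · exact (le_abs_self _).trans (hAB.trans hle1)
  · have : (bq σ q k) ^ 2 ≤ 1 / ((k : ℝ) + 1) ^ 2 := by
      rw [← sq_abs]
      calc |bq σ q k| ^ 2 ≤ (1 / ((k : ℝ) + 1)) ^ 2 := by gcongr
        _ = _ := by rw [div_pow, one_pow]
    have h3 : |bq σ q k| * (1 - q) ≤ u * (1 - q) / (1 - u) * (1 - q) := by
      apply mul_le_mul_of_nonneg_right hA; linarith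
    linarith

/-- The factor in the q-Euler product. -/
noncomputable def Ff (σ e : ℝ) (x : ℂ) (k : ℕ) : ℂ :=
  (1 + (bq σ (Real.exp (-e)) k : ℝ) *
    ((1 - Complex.exp (-e * x)) / ((1 - Real.exp (-e) : ℝ) : ℂ))) *
    Complex.exp (-x * (Real.log (1 + bq σ (Real.exp (-e)) k) : ℝ))

lemma summable_inv_sq (C : ℝ) : Summable (fun k : ℕ => C * (5 * (1 / ((k : ℝ) + 1) ^ 2))) := by
  apply Summable.mul_left
  apply Summable.mul_left
  have := (summable_nat_add_iff 1).2 (Real.summable_one_div_nat_pow.2 (by norm_num : 1 < 2))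
  simpa using this

/-- Uniform bound. -/
lemma Ff_bound (R : ℝ) (hR : 0 ≤ R) : ∃ C : ℝ, ∀ (σ e : ℝ) (x : ℂ), (σ = 1 ∨ σ = -1) → 0 < e →
    e ≤ 1 / 2 → ‖x‖ ≤ R → ∀ k, ‖Ff σ e x k - 1‖ ≤ C * (5 * (1 / ((k : ℝ) + 1) ^ 2)) := by
  obtain ⟨K, hK, h1⟩ := aux_c R hR
  obtain ⟨C, hC, h2⟩ := aux_bound K (hR.trans hK)
  refine ⟨C, ?_⟩
  intro σ e x hσ he he1 hx k
  have q0 := Real.exp_pos (-e)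
  have q1 : Real.exp (-e) < 1 := by rw [Real.exp_lt_one_iff]; linarith
  obtain ⟨_, b1, b2, b3⟩ := bq_bounds σ _ hσ q0 q1 k
  refine (h2 _ (1 - Real.exp (-e)) x _ b1 b2 (by linarith) (by linarith) (hx.trans hK)
    (h1 e x he he1 hx)).trans ?_
  gcongr

lemma Ff_mult (σ e : ℝ) (x : ℂ) (hσ : σ = 1 ∨ σ = -1) (he : 0 < e) (he1 : e ≤ 1 / 2) :
    Multipliable (Ff σ e x) := by
  obtain ⟨C, hC⟩ := Ff_bound ‖x‖ (norm_nonneg x)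
  have : Summable fun k => ‖Ff σ e x k - 1‖ :=
    (summable_inv_sq C).of_nonneg_of_le (fun _ => norm_nonneg _) (hC σ e x hσ he he1 le_rfl)
  have h := multipliable_one_add_of_summable this
  simpa using h

lemma poch_summable (a : ℂ) (q : ℝ) (h0 : 0 < q) (h1 : q < 1) :
    Summable fun k : ℕ => ‖-(a * (q : ℂ) ^ k)‖ := by
  have : (fun k : ℕ => ‖-(a * (q : ℂ) ^ k)‖) = fun k : ℕ => ‖a‖ * q ^ k := by
    ext k; rw [norm_neg, norm_mul, norm_pow, Complex.norm_real, Real.norm_eq_abs, abs_of_pos h0]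
  rw [this]
  exact (summable_geometric_of_lt_one h0.le h1).mul_left _

lemma poch_mult (a : ℂ) (q : ℝ) (h0 : 0 < q) (h1 : q < 1) :
    Multipliable fun k : ℕ => (1 - a * (q : ℂ) ^ k) := by
  have := multipliable_one_add_of_summable (poch_summable a q h0 h1)
  simpa [sub_eq_add_neg] using this

lemma poch_ne_zero (a : ℂ) (q : ℝ) (h0 : 0 < q) (h1 : q < 1) (h : ∀ k : ℕ, 1 - a * (q : ℂ) ^ k ≠ 0) :
    qPochInf a q ≠ 0 := by
  unfold qPochInf
  have := tprod_one_add_ne_zero_of_summable (f := fun k : ℕ => -(a * (q : ℂ) ^ k))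
    (by simpa [sub_eq_add_neg] using h) (poch_summable a q h0 h1)
  simpa [sub_eq_add_neg] using this

lemma poch_succ (a : ℂ) (q : ℝ) (h0 : 0 < q) (h1 : q < 1) :
    qPochInf a q = (1 - a) * qPochInf (a * q) q := by
  unfold qPochInf
  have h := tprod_eq_zero_mul' (f := fun k : ℕ => (1 - a * (q : ℂ) ^ k))
    (by simpa [pow_succ', mul_assoc] using poch_mult (a * q) q h0 h1)
  rw [h]
  simp [pow_succ', mul_assoc]

lemma Ff_prod (σ e : ℝ) (x : ℂ) (hσ : σ = 1 ∨ σ = -1) (he : 0 < e) (M : ℕ) :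
    (∏ k ∈ Finset.range M, Ff σ e x k) *
      (∏ k ∈ Finset.range M, (1 - ((σ * Real.exp (-e) : ℝ) : ℂ) * ((Real.exp (-e) : ℝ) : ℂ) ^ k)) =
    (∏ k ∈ Finset.range M, (1 - ((σ * Real.exp (-e) : ℝ) : ℂ) * Complex.exp (-e * x) *
      ((Real.exp (-e) : ℝ) : ℂ) ^ k)) *
      Complex.exp (x * ((Real.log (1 - σ * Real.exp (-e)) - Real.log (1 - σ * Real.exp (-e) ^ (M + 1)) : ℝ) : ℂ)) := by
  set q := Real.exp (-e) with hq
  have q0 : 0 < q := Real.exp_pos (-e)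
  have q1 : q < 1 := by rw [hq, Real.exp_lt_one_iff]; linarith
  have hd : ((1 - q : ℝ) : ℂ) ≠ 0 := by
    have : (1 - q) ≠ 0 := by linarith
    exact_mod_cast this
  induction M with
  | zero => simp
  | succ M ih =>
    rw [Finset.prod_range_succ, Finset.prod_range_succ, Finset.prod_range_succ, mul_mul_mul_comm, ih]
    obtain ⟨hp, b1, b2, -⟩ := bq_bounds σ q hσ q0 q1 M
    obtain ⟨hp', -⟩ := bq_bounds σ q hσ q0 q1 (M + 1)
    have h1b : 1 + bq σ q M = (1 - σ * q ^ (M + 1 + 1)) / (1 - σ * q ^ (M + 1)) := by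
      unfold bq; field_simp; ring
    have hlog : Real.log (1 + bq σ q M) =
        Real.log (1 - σ * q ^ (M + 1 + 1)) - Real.log (1 - σ * q ^ (M + 1)) := by
      rw [h1b, Real.log_div hp'.ne' hp.ne']
    have hpc : ((1 - σ * q ^ (M + 1) : ℝ) : ℂ) ≠ 0 := by exact_mod_cast hp.ne'
    have hF : Ff σ e x M * (1 - ((σ * q : ℝ) : ℂ) * (q : ℂ) ^ M) =
        (1 - ((σ * q : ℝ) : ℂ) * Complex.exp (-e * x) * (q : ℂ) ^ M) *
        Complex.exp (-x * ((Real.log (1 - σ * q ^ (M + 1 + 1)) - Real.log (1 - σ * q ^ (M + 1)) : ℝ) : ℂ)) := by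
      unfold Ff
      rw [← hq, hlog]
      have hb : ((bq σ q M : ℝ) : ℂ) = ((σ * q ^ (M + 1) : ℝ) : ℂ) * ((1 - q : ℝ) : ℂ) / ((1 - σ * q ^ (M + 1) : ℝ) : ℂ) := by
        unfold bq; push_cast; ring
      rw [hb]
      have h4 : (1 - ((σ * q : ℝ) : ℂ) * (q : ℂ) ^ M) = ((1 - σ * q ^ (M + 1) : ℝ) : ℂ) := by
        push_cast; ring
      rw [h4]
      have h5 : (1 + ((σ * q ^ (M + 1) : ℝ) : ℂ) * ((1 - q : ℝ) : ℂ) / ((1 - σ * q ^ (M + 1) : ℝ) : ℂ) *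
        ((1 - Complex.exp (-e * x)) / ((1 - q : ℝ) : ℂ))) * ((1 - σ * q ^ (M + 1) : ℝ) : ℂ) =
        (1 - ((σ * q : ℝ) : ℂ) * Complex.exp (-e * x) * (q : ℂ) ^ M) := by
        rw [div_mul_div_comm, mul_right_comm, mul_div_mul_right _ _ hd,
          add_mul, div_mul_cancel₀ _ hpc]
        push_cast; ring
      rw [← h5]; ring
    rw [hF, mul_mul_mul_comm, ← Complex.exp_add]
    congr 2
    push_cast; ring

lemma Ff_tprod (σ e : ℝ) (x : ℂ) (hσ : σ = 1 ∨ σ = -1) (he : 0 < e) (he1 : e ≤ 1 / 2) :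
    (∏' k, Ff σ e x k) * qPochInf ((σ * Real.exp (-e) : ℝ) : ℂ) ((Real.exp (-e) : ℝ) : ℂ) =
    qPochInf (((σ * Real.exp (-e) : ℝ) : ℂ) * Complex.exp (-e * x)) ((Real.exp (-e) : ℝ) : ℂ) *
      Complex.exp (x * (Real.log (1 - σ * Real.exp (-e)) : ℝ)) := by
  have q0 : 0 < Real.exp (-e) := Real.exp_pos (-e)
  have q1 : Real.exp (-e) < 1 := by rw [Real.exp_lt_one_iff]; linarith
  have l1 := ((Ff_mult σ e x hσ he he1).hasProd.tendsto_prod_nat).mul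
    (poch_mult ((σ * Real.exp (-e) : ℝ) : ℂ) _ q0 q1).hasProd.tendsto_prod_nat
  have l2 := (poch_mult (((σ * Real.exp (-e) : ℝ) : ℂ) * Complex.exp (-e * x)) _ q0 q1).hasProd.tendsto_prod_nat
  have l3 : Tendsto (fun M : ℕ => Complex.exp (x * ((Real.log (1 - σ * Real.exp (-e)) -
      Real.log (1 - σ * Real.exp (-e) ^ (M + 1)) : ℝ) : ℂ))) atTop
      (𝓝 (Complex.exp (x * (Real.log (1 - σ * Real.exp (-e)) : ℝ)))) := by
    have hp : Tendsto (fun M : ℕ => Real.exp (-e) ^ (M + 1)) atTop (𝓝 0) :=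
      (tendsto_pow_atTop_nhds_zero_of_lt_one q0.le q1).comp (tendsto_add_atTop_nat 1)
    have h2 : Tendsto (fun M : ℕ => Real.log (1 - σ * Real.exp (-e)) -
      Real.log (1 - σ * Real.exp (-e) ^ (M + 1))) atTop (𝓝 (Real.log (1 - σ * Real.exp (-e)) - Real.log (1 - σ * 0))) := by
      apply tendsto_const_nhds.sub
      apply Tendsto.log _ (by simp)
      exact tendsto_const_nhds.sub (hp.const_mul σ)
    simp only [mul_zero, sub_zero, Real.log_one] at h2
    exact (Complex.continuous_exp.tendsto _).comp
      (((Complex.continuous_ofReal.tendsto _).comp h2).const_mul x)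
  refine tendsto_nhds_unique l1 ?_
  refine (l2.mul l3).congr fun M => ?_
  exact (Ff_prod σ e x hσ he M).symm

lemma exp_neg_tendsto {e : ℕ → ℝ} (he0 : Tendsto e atTop (𝓝 0)) :
    Tendsto (fun N => Real.exp (-(e N))) atTop (𝓝 1) := by
  have := (Real.continuous_exp.tendsto _).comp he0.neg
  simpa [Function.comp_def] using this

lemma c_tendsto {e : ℕ → ℝ} {X : ℕ → ℂ} {x : ℂ} (he : ∀ᶠ N in atTop, 0 < e N)
    (he0 : Tendsto e atTop (𝓝 0)) (hX : Tendsto X atTop (𝓝 x)) :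
    Tendsto (fun N => (1 - Complex.exp (-(e N) * X N)) / ((1 - Real.exp (-(e N)) : ℝ) : ℂ)) atTop (𝓝 x) := by
  obtain ⟨K, -, hK⟩ := aux_c (‖x‖ + 1) (by positivity)
  have hR : ∀ᶠ N in atTop, ‖X N‖ ≤ ‖x‖ + 1 :=
    (hX.norm.eventually (gt_mem_nhds (lt_add_one ‖x‖))).mono fun _ h => h.le
  have hs : ∀ᶠ N in atTop, e N ≤ 1 / 2 :=
    (he0.eventually (gt_mem_nhds (by norm_num : (0 : ℝ) < 1 / 2))).mono fun _ h => h.le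
  have hdiff : Tendsto (fun N => (1 - Complex.exp (-(e N) * X N)) / ((1 - Real.exp (-(e N)) : ℝ) : ℂ) - X N)
      atTop (𝓝 0) := by
    apply squeeze_zero_norm' (a := fun N => K * (1 - Real.exp (-(e N))))
    · filter_upwards [he, hR, hs] with N h1 h2 h3
      exact hK _ _ h1 h3 h2
    · have := (exp_neg_tendsto he0).const_sub 1 |>.const_mul K
      simpa using this
  simpa using hdiff.add hX

/-- limit of `bq` -/
noncomputable def bl (σ : ℝ) (k : ℕ) : ℝ := if σ = 1 then 1 / ((k : ℝ) + 1) else 0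

lemma bq_tendsto {σ : ℝ} (hσ : σ = 1 ∨ σ = -1) {e : ℕ → ℝ} (he : ∀ᶠ N in atTop, 0 < e N)
    (he0 : Tendsto e atTop (𝓝 0)) (k : ℕ) :
    Tendsto (fun N => bq σ (Real.exp (-(e N))) k) atTop (𝓝 (bl σ k)) := by
  have hq := exp_neg_tendsto he0
  rcases hσ with rfl | rfl
  · have h1 : Tendsto (fun N => Real.exp (-(e N)) ^ (k + 1) /
        (∑ i ∈ Finset.range (k + 1), Real.exp (-(e N)) ^ i)) atTop (𝓝 (1 ^ (k + 1) /
        (∑ i ∈ Finset.range (k + 1), 1 ^ i))) := by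
      apply (hq.pow _).div (tendsto_finsetSum _ fun i _ => hq.pow i)
      simp; positivity
    have h2 : bl 1 k = 1 ^ (k + 1) / (∑ i ∈ Finset.range (k + 1), 1 ^ i) := by simp [bl]
    rw [h2]
    refine h1.congr' ?_
    filter_upwards [he] with N hN
    have q1 : Real.exp (-(e N)) < 1 := by rw [Real.exp_lt_one_iff]; linarith
    have hd : (1 - Real.exp (-(e N))) ≠ 0 := by linarith
    unfold bq
    rw [one_mul, ← mul_neg_geom_sum, mul_comm, mul_div_mul_left _ _ hd]
  · have h1 : Tendsto (fun N => bq (-1) (Real.exp (-(e N))) k) atTop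
      (𝓝 (-1 * 1 ^ (k + 1) * (1 - 1) / (1 - -1 * 1 ^ (k + 1)))) := by
      unfold bq
      apply Tendsto.div
      · exact ((hq.pow _).const_mul _).mul (hq.const_sub 1)
      · exact ((hq.pow _).const_mul _).const_sub 1
      · norm_num
    have h2 : bl (-1) k = (-1 * 1 ^ (k + 1) * (1 - 1) / (1 - -1 * 1 ^ (k + 1))) := by
      norm_num [bl]
    rw [h2]; exact h1

/-- limiting factor -/
noncomputable def Gf (σ : ℝ) (x : ℂ) (k : ℕ) : ℂ :=
  (1 + (bl σ k : ℝ) * x) * Complex.exp (-x * (Real.log (1 + bl σ k) : ℝ))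

lemma bl_nonneg (σ : ℝ) (k : ℕ) : 0 ≤ bl σ k := by unfold bl; split_ifs <;> positivity

lemma Ff_tendsto {σ : ℝ} (hσ : σ = 1 ∨ σ = -1) {e : ℕ → ℝ} {X : ℕ → ℂ} {x : ℂ} (he : ∀ᶠ N in atTop, 0 < e N)
    (he0 : Tendsto e atTop (𝓝 0)) (hX : Tendsto X atTop (𝓝 x)) (k : ℕ) :
    Tendsto (fun N => Ff σ (e N) (X N) k) atTop (𝓝 (Gf σ x k)) := by
  have hb := bq_tendsto hσ he he0 k
  have hbc := (Complex.continuous_ofReal.tendsto _).comp hb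
  have hl := (Complex.continuous_ofReal.tendsto _).comp
    ((hb.const_add 1).log (by linarith [bl_nonneg σ k]))
  exact ((hbc.mul (c_tendsto he he0 hX)).const_add 1).mul
    ((Complex.continuous_exp.tendsto _).comp (hX.neg.mul hl))

lemma tprod_tendsto {σ : ℝ} (hσ : σ = 1 ∨ σ = -1) {e : ℕ → ℝ} {X : ℕ → ℂ} {x : ℂ} (he : ∀ᶠ N in atTop, 0 < e N)
    (he0 : Tendsto e atTop (𝓝 0)) (hX : Tendsto X atTop (𝓝 x)) :
    Tendsto (fun N => ∏' k, Ff σ (e N) (X N) k) atTop (𝓝 (∏' k, Gf σ x k)) := by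
  obtain ⟨C, hC⟩ := Ff_bound (‖x‖ + 1) (by positivity)
  have hR : ∀ᶠ N in atTop, ‖X N‖ ≤ ‖x‖ + 1 :=
    (hX.norm.eventually (gt_mem_nhds (lt_add_one ‖x‖))).mono fun _ h => h.le
  have hs : ∀ᶠ N in atTop, e N ≤ 1 / 2 :=
    (he0.eventually (gt_mem_nhds (by norm_num : (0 : ℝ) < 1 / 2))).mono fun _ h => h.le
  have := tendsto_tprod_one_add_of_dominated_convergence (𝓕 := atTop)
    (f := fun N k => Ff σ (e N) (X N) k - 1) (g := fun k => Gf σ x k - 1) (summable_inv_sq C)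
    (fun k => (Ff_tendsto hσ he he0 hX k).sub_const 1)
    (by
      filter_upwards [he, hR, hs] with N h1 h2 h3
      exact hC σ _ _ hσ h1 h3 h2)
  simpa using this

lemma Gf_mult (x : ℂ) : Multipliable (Gf 1 x) := by
  obtain ⟨C, hC, hb⟩ := aux_bound ‖x‖ (norm_nonneg x)
  have : Summable fun k => ‖Gf 1 x k - 1‖ := by
    refine (summable_inv_sq C).of_nonneg_of_le (fun _ => norm_nonneg _) fun k => ?_
    have h1 : bl 1 k ≤ 1 := by
      simp only [bl, if_true]
      rw [div_le_one (by positivity)]; linarith [(Nat.cast_nonneg k : (0 : ℝ) ≤ k)]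
    refine (hb (bl 1 k) 0 x x (by linarith [bl_nonneg 1 k]) h1 le_rfl zero_le_one le_rfl (by simp)).trans ?_
    apply mul_le_mul_of_nonneg_left _ hC
    have : (bl 1 k) ^ 2 = 1 / ((k : ℝ) + 1) ^ 2 := by simp [bl]
    rw [this]
    have : 0 ≤ 1 / ((k : ℝ) + 1) ^ 2 := by positivity
    linarith
  have h := multipliable_one_add_of_summable this
  simpa using h

lemma Gf_prod (x : ℂ) (M : ℕ) : ∏ k ∈ Finset.range M, Gf 1 x k =
    (∏ j ∈ Finset.range M, (x + 1 + j)) / (M.factorial : ℂ) * Complex.exp (-x * (Real.log (M + 1) : ℝ)) := by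
  induction M with
  | zero => simp
  | succ M ih =>
    rw [Finset.prod_range_succ, ih, Finset.prod_range_succ, Nat.factorial_succ]
    have hM : (0 : ℝ) < (M : ℝ) + 1 := by positivity
    have hM' : ((M : ℂ) + 1) ≠ 0 := by exact_mod_cast hM.ne'
    have hf : (M.factorial : ℂ) ≠ 0 := by exact_mod_cast M.factorial_ne_zero
    have h1 : 1 + bl 1 M = ((M + 1 : ℕ) + 1 : ℝ) / (M + 1) := by
      simp only [bl, if_true]; push_cast; field_simp
      try ring
    have hlog : Real.log (1 + bl 1 M) = Real.log ((M + 1 : ℕ) + 1 : ℝ) - Real.log (M + 1) := by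
      rw [h1, Real.log_div (by positivity) hM.ne']
    unfold Gf
    rw [hlog]
    have h2 : (1 + ((bl 1 M : ℝ) : ℂ) * x) = (x + 1 + M) / (M + 1) := by
      simp only [bl, if_true]; push_cast; field_simp
      try ring
    rw [h2]
    have h3 : Complex.exp (-x * ((Real.log ((M + 1 : ℕ) + 1 : ℝ) : ℝ) : ℂ)) =
      Complex.exp (-x * (Real.log (M + 1) : ℝ)) *
      Complex.exp (-x * ((Real.log ((M + 1 : ℕ) + 1 : ℝ) - Real.log (M + 1) : ℝ) : ℂ)) := by
      rw [← Complex.exp_add]; congr 1; push_cast; ring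
    rw [h3]
    push_cast
    field_simp

lemma Gf_tprod (x : ℂ) (hx : ∀ n : ℕ, x + 1 ≠ -n) : ∏' k, Gf 1 x k = (Complex.Gamma (x + 1))⁻¹ := by
  have l1 := ((Gf_mult x).hasProd.tendsto_prod_nat).comp (tendsto_add_atTop_nat 1)
  have l2 := (Complex.GammaSeq_tendsto_Gamma (x + 1)).inv₀ (Complex.Gamma_ne_zero hx)
  have l3 : Tendsto (fun n : ℕ => (((n : ℝ) / ((n : ℝ) + 1) : ℝ) : ℂ)) atTop (𝓝 1) := by
    have := (Complex.continuous_ofReal.tendsto _).comp (tendsto_natCast_div_add_atTop (1 : ℝ))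
    simpa [Function.comp_def] using this
  have l4 : Tendsto (fun n : ℕ => Complex.exp (x * (Real.log ((n : ℝ) / ((n : ℝ) + 2)) : ℝ))) atTop (𝓝 1) := by
    have h1 := (tendsto_natCast_div_add_atTop (2 : ℝ)).log one_ne_zero
    have h2 := ((Complex.continuous_ofReal.tendsto _).comp h1).const_mul x
    have := (Complex.continuous_exp.tendsto _).comp h2
    simpa [Function.comp_def] using this
  refine tendsto_nhds_unique l1 ?_
  have l5 := (l2.mul l3).mul l4
  rw [mul_one, mul_one] at l5
  refine l5.congr' ?_
  filter_upwards [eventually_gt_atTop 0] with n hn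
  simp only [Function.comp]
  rw [Gf_prod, Complex.GammaSeq, Nat.factorial_succ]
  have hn0 : (0 : ℝ) < n := by exact_mod_cast hn
  have hnc : (n : ℂ) ≠ 0 := by exact_mod_cast hn0.ne'
  have hn1 : (n : ℂ) + 1 ≠ 0 := by exact_mod_cast (by positivity : (0 : ℝ) < (n : ℝ) + 1).ne'
  have hf : (n.factorial : ℂ) ≠ 0 := by exact_mod_cast n.factorial_ne_zero
  rw [Complex.cpow_add _ _ hnc, Complex.cpow_one, Complex.cpow_def_of_ne_zero hnc,
    Real.log_div hn0.ne' (by positivity), ← Complex.natCast_log]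
  have h3 : Complex.exp (x * ((Real.log n - Real.log ((n : ℝ) + 2) : ℝ) : ℂ)) =
      Complex.exp ((Real.log n : ℝ) * x) * Complex.exp (-x * (Real.log (((n + 1 : ℕ) : ℝ) + 1) : ℝ)) := by
    rw [← Complex.exp_add]; congr 1
    have : ((n + 1 : ℕ) : ℝ) + 1 = (n : ℝ) + 2 := by push_cast; ring
    rw [this]; push_cast; ring
  rw [h3]
  have he := Complex.exp_ne_zero ((Real.log n : ℝ) * x)
  push_cast
  push_cast at he
  field_simp

/-- q-Gamma convergence. -/
lemma lemA {e : ℕ → ℝ} {X : ℕ → ℂ} {x : ℂ} (he : ∀ᶠ N in atTop, 0 < e N)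
    (he0 : Tendsto e atTop (𝓝 0)) (hX : Tendsto X atTop (𝓝 x)) (hx : ∀ n : ℕ, x ≠ -n) :
    ∃ g : ℕ → ℂ, Tendsto g atTop (𝓝 (Complex.Gamma x)⁻¹) ∧ ∀ᶠ N in atTop,
      qPochInf (Complex.exp (-(e N) * X N)) ((Real.exp (-(e N)) : ℝ) : ℂ) =
      qPochInf ((Real.exp (-(e N)) : ℝ) : ℂ) ((Real.exp (-(e N)) : ℝ) : ℂ) *
      Complex.exp ((1 - X N) * (Real.log (1 - Real.exp (-(e N))) : ℝ)) * g N := by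
  have hs : ∀ᶠ N in atTop, e N ≤ 1 / 2 :=
    (he0.eventually (gt_mem_nhds (by norm_num : (0 : ℝ) < 1 / 2))).mono fun _ h => h.le
  refine ⟨fun N => (1 - Complex.exp (-(e N) * X N)) / ((1 - Real.exp (-(e N)) : ℝ) : ℂ) *
    ∏' k, Ff 1 (e N) (X N) k, ?_, ?_⟩
  · have h := (c_tendsto he he0 hX).mul (tprod_tendsto (Or.inl rfl) he he0 hX)
    rw [Gf_tprod x] at h
    · have hx0 : x ≠ 0 := by simpa using hx 0
      rw [Complex.Gamma_add_one x hx0, mul_inv, mul_inv_cancel_left₀ hx0] at h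
      exact h
    · intro n hn
      apply hx (n + 1)
      push_cast
      linear_combination hn
  · filter_upwards [he, hs] with N h1 h2
    have q0 : 0 < Real.exp (-(e N)) := Real.exp_pos _
    have q1 : Real.exp (-(e N)) < 1 := by rw [Real.exp_lt_one_iff]; linarith
    have hT := Ff_tprod 1 (e N) (X N) (Or.inl rfl) h1 h2
    simp only [one_mul] at hT
    rw [poch_succ _ _ q0 q1, mul_comm (Complex.exp _) ((Real.exp (-(e N)) : ℝ) : ℂ)]
    set A := qPochInf (((Real.exp (-(e N)) : ℝ) : ℂ) * Complex.exp (-(e N) * X N)) ((Real.exp (-(e N)) : ℝ) : ℂ)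
    set T := ∏' k, Ff 1 (e N) (X N) k
    set Q := qPochInf ((Real.exp (-(e N)) : ℝ) : ℂ) ((Real.exp (-(e N)) : ℝ) : ℂ)
    have hd : 0 < 1 - Real.exp (-(e N)) := by linarith
    have hdc : ((1 - Real.exp (-(e N)) : ℝ) : ℂ) ≠ 0 := by exact_mod_cast hd.ne'
    have hE : Complex.exp ((1 - X N) * (Real.log (1 - Real.exp (-(e N))) : ℝ)) *
        Complex.exp (X N * (Real.log (1 - Real.exp (-(e N))) : ℝ)) = ((1 - Real.exp (-(e N)) : ℝ) : ℂ) := by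
      rw [← Complex.exp_add, ← add_mul, sub_add_cancel, one_mul, ← Complex.ofReal_exp, Real.exp_log hd]
    set E1 := Complex.exp ((1 - X N) * (Real.log (1 - Real.exp (-(e N))) : ℝ))
    set E2 := Complex.exp (X N * (Real.log (1 - Real.exp (-(e N))) : ℝ))
    set d := ((1 - Real.exp (-(e N)) : ℝ) : ℂ)
    set c := (1 - Complex.exp (-(e N) * X N))
    have : Q * E1 * (c / d * T) = c / d * E1 * (T * Q) := by ring
    rw [this, hT]
    have : c / d * E1 * (A * E2) = c / d * A * (E1 * E2) := by ring
    rw [this, hE]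
    field_simp

/-- The factors with negative argument. -/
lemma lemB {e : ℕ → ℝ} {X : ℕ → ℂ} {x : ℂ} (he : ∀ᶠ N in atTop, 0 < e N)
    (he0 : Tendsto e atTop (𝓝 0)) (hX : Tendsto X atTop (𝓝 x)) :
    ∃ g : ℕ → ℂ, Tendsto g atTop (𝓝 1) ∧ ∀ᶠ N in atTop,
      qPochInf (-Complex.exp (-(e N) * X N)) ((Real.exp (-(e N)) : ℝ) : ℂ) =
      qPochInf (-((Real.exp (-(e N)) : ℝ) : ℂ)) ((Real.exp (-(e N)) : ℝ) : ℂ) *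
      Complex.exp ((1 - X N) * (Real.log (1 + Real.exp (-(e N))) : ℝ)) * g N := by
  have hs : ∀ᶠ N in atTop, e N ≤ 1 / 2 :=
    (he0.eventually (gt_mem_nhds (by norm_num : (0 : ℝ) < 1 / 2))).mono fun _ h => h.le
  refine ⟨fun N => ∏' k, Ff (-1) (e N) (X N - 1) k, ?_, ?_⟩
  · have h := tprod_tendsto (Or.inr rfl) he he0 (hX.sub_const 1)
    have h1 : ∀ k, Gf (-1) (x - 1) k = 1 := by
      intro k
      have : bl (-1) k = 0 := by norm_num [bl]
      simp [Gf, this]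
    simpa [h1] using h
  · filter_upwards [he, hs] with N h1 h2
    have hT := Ff_tprod (-1) (e N) (X N - 1) (Or.inr rfl) h1 h2
    have h3 : ((-1 * Real.exp (-(e N)) : ℝ) : ℂ) * Complex.exp (-(e N) * (X N - 1)) = -Complex.exp (-(e N) * X N) := by
      push_cast
      rw [mul_assoc, ← Complex.exp_add, neg_one_mul]
      congr 2; ring
    rw [h3] at hT
    have h4 : 1 - -1 * Real.exp (-(e N)) = 1 + Real.exp (-(e N)) := by ring
    have h5 : ((-1 * Real.exp (-(e N)) : ℝ) : ℂ) = -((Real.exp (-(e N)) : ℝ) : ℂ) := by push_cast; ring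
    rw [h4, h5] at hT
    rw [mul_right_comm, mul_comm (qPochInf _ _), hT, mul_assoc, ← Complex.exp_add]
    have : (X N - 1) * ((Real.log (1 + Real.exp (-(e N))) : ℝ) : ℂ) + (1 - X N) * ((Real.log (1 + Real.exp (-(e N))) : ℝ) : ℂ) = 0 := by ring
    rw [this, Complex.exp_zero, mul_one]

/-- `ε_N = 2/√N`. -/
noncomputable def ep (N : ℕ) : ℝ := 2 / Real.sqrt N

lemma sqrtN_tendsto : Tendsto (fun N : ℕ => Real.sqrt N) atTop atTop :=
  Real.tendsto_sqrt_atTop.comp tendsto_natCast_atTop_atTop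

lemma ep_tendsto : Tendsto ep atTop (𝓝 0) :=
  tendsto_const_nhds.div_atTop sqrtN_tendsto

lemma ep_pos : ∀ᶠ N in atTop, 0 < ep N := by
  filter_upwards [eventually_gt_atTop 0] with N hN
  have : (0 : ℝ) < N := by exact_mod_cast hN
  unfold ep; positivity

lemma qN_eq (N : ℕ) : qN N = Real.exp (-(ep N)) := by
  unfold qN ep; congr 1; ring

lemma qe_eq (N : ℕ) (x φ : ℝ) (h : 0 < ep N) :
    qpow N x * eI φ = Complex.exp (-(ep N) * ((x : ℂ) - ((φ / ep N : ℝ) : ℂ) * Complex.I)) := by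
  unfold qpow eI
  rw [Complex.ofReal_exp, ← Complex.exp_add]
  congr 1
  have : ((ep N : ℝ) : ℂ) ≠ 0 := by exact_mod_cast h.ne'
  have h2 : -2 * x / Real.sqrt N = -(ep N) * x := by unfold ep; ring
  rw [h2]
  push_cast
  field_simp
  ring

noncomputable def Aexp (N : ℕ) (x φ : ℝ) : ℂ :=
  Complex.exp ((1 - ((x : ℂ) - ((φ / ep N : ℝ) : ℂ) * Complex.I)) * (Real.log (1 - qN N) : ℝ))

noncomputable def Bexp (N : ℕ) (x φ : ℝ) : ℂ :=
  Complex.exp ((1 - ((x : ℂ) - ((φ / ep N : ℝ) : ℂ) * Complex.I)) * (Real.log (1 + qN N) : ℝ))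

lemma arg_tendsto {x y : ℝ} {φ : ℕ → ℝ} (hφ : Tendsto (fun N => φ N / ep N) atTop (𝓝 y)) :
    Tendsto (fun N => (x : ℂ) - ((φ N / ep N : ℝ) : ℂ) * Complex.I) atTop (𝓝 ((x : ℂ) - (y : ℂ) * Complex.I)) :=
  (((Complex.continuous_ofReal.tendsto _).comp hφ).mul_const _).const_sub _

lemma lemA' (x y : ℝ) (φ : ℕ → ℝ) (hφ : Tendsto (fun N => φ N / ep N) atTop (𝓝 y))
    (h : 0 < x ∨ y ≠ 0) :
    ∃ g : ℕ → ℂ, Tendsto g atTop (𝓝 (Complex.Gamma ((x : ℂ) - (y : ℂ) * Complex.I))⁻¹) ∧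
      ∀ᶠ N in atTop, qPochInf (qpow N x * eI (φ N)) (qN N) =
        qPochInf (qN N) (qN N) * Aexp N x (φ N) * g N := by
  obtain ⟨g, hg, h2⟩ := lemA ep_pos ep_tendsto (arg_tendsto (x := x) hφ) (by
    intro n hn
    have h1 := congrArg Complex.re hn
    have h2 := congrArg Complex.im hn
    simp at h1 h2
    rcases h with h | h
    · have : (0 : ℝ) ≤ n := Nat.cast_nonneg n
      linarith
    · exact h h2)
  refine ⟨g, hg, ?_⟩
  filter_upwards [h2, ep_pos] with N h3 h4
  rw [qe_eq N x _ h4]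
  unfold Aexp
  rw [qN_eq]
  exact h3

lemma lemB' (x y : ℝ) (φ : ℕ → ℝ) (hφ : Tendsto (fun N => φ N / ep N) atTop (𝓝 y)) :
    ∃ g : ℕ → ℂ, Tendsto g atTop (𝓝 1) ∧
      ∀ᶠ N in atTop, qPochInf (-(qpow N x) * eI (φ N)) (qN N) =
        qPochInf (-(qN N : ℂ)) (qN N) * Bexp N x (φ N) * g N := by
  obtain ⟨g, hg, h2⟩ := lemB ep_pos ep_tendsto (arg_tendsto (x := x) hφ)
  refine ⟨g, hg, ?_⟩
  filter_upwards [h2, ep_pos] with N h3 h4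
  rw [neg_mul, qe_eq N x _ h4]
  unfold Bexp
  rw [qN_eq]
  exact h3

/-- the angle -/
noncomputable def th (m : ℝ) (N : ℕ) : ℝ := Real.arccos (1 - m / (2 * (N : ℝ)))

lemma arccos_half (y : ℝ) (h0 : 0 ≤ y) (h1 : y ≤ 1) : Real.arccos (1 - 2 * y ^ 2) = 2 * Real.arcsin y := by
  have hs := Real.sin_arcsin (by linarith) h1
  have hc : Real.cos (2 * Real.arcsin y) = 1 - 2 * y ^ 2 := by
    rw [Real.cos_two_mul, Real.cos_sq', hs]; ring
  rw [← hc, Real.arccos_cos]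
  · have := Real.arcsin_nonneg.2 h0; linarith
  · have := Real.arcsin_le_pi_div_two y; linarith

lemma th_tendsto (m : ℝ) (hm : 0 < m) : Tendsto (fun N => th m N / ep N) atTop (𝓝 (Real.sqrt m / 2)) := by
  set δ := Real.sqrt m / 2 with hδ
  have hδ0 : 0 < δ := by positivity
  have hd : HasDerivAt Real.arcsin 1 0 := by
    have := Real.hasDerivAt_arcsin (x := 0) (by norm_num) (by norm_num)
    simpa using this
  have h1 := hd.tendsto_slope_zero
  have hy : Tendsto (fun N : ℕ => δ / Real.sqrt N) atTop (𝓝[≠] 0) := by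
    rw [tendsto_nhdsWithin_iff]
    refine ⟨tendsto_const_nhds.div_atTop sqrtN_tendsto, ?_⟩
    filter_upwards [eventually_gt_atTop 0] with N hN
    have : (0 : ℝ) < N := by exact_mod_cast hN
    have : 0 < δ / Real.sqrt N := by positivity
    exact this.ne'
  have h2 := (h1.comp hy).const_mul δ
  rw [mul_one] at h2
  refine h2.congr' ?_
  have hle : ∀ᶠ N : ℕ in atTop, δ / Real.sqrt N ≤ 1 :=
    ((tendsto_const_nhds.div_atTop sqrtN_tendsto).eventually
      (gt_mem_nhds (by norm_num : (0 : ℝ) < 1))).mono fun _ h => h.le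
  filter_upwards [eventually_gt_atTop 0, hle] with N hN hN1
  have hN0 : (0 : ℝ) < N := by exact_mod_cast hN
  have hsN : 0 < Real.sqrt N := by positivity
  have e1 : 1 - m / (2 * (N : ℝ)) = 1 - 2 * (δ / Real.sqrt N) ^ 2 := by
    rw [div_pow, hδ, div_pow, Real.sq_sqrt hm.le, Real.sq_sqrt hN0.le]; field_simp
    try norm_num
  unfold th ep
  rw [e1, arccos_half _ (by positivity) hN1]
  simp only [Function.comp, zero_add, Real.arcsin_zero, sub_zero, smul_eq_mul]
  field_simp

lemma const_tendsto (m : ℝ) (hm : 0 < m) :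
    Tendsto (fun N : ℕ => Complex.exp (-(Real.log (1 - qN N) : ℝ)) /
      (Complex.ofReal (4 * Real.pi * (N : ℝ)) * Complex.ofReal (Real.sqrt (m / (N : ℝ))))) atTop
      (𝓝 (1 / Complex.ofReal (8 * Real.pi * Real.sqrt m))) := by
  have hc : Tendsto (fun N : ℕ => (1 - Real.exp (-(ep N))) / ep N) atTop (𝓝 1) := by
    have := c_tendsto (X := fun _ => 1) ep_pos ep_tendsto tendsto_const_nhds
    have hd : HasDerivAt Real.exp 1 0 := by simpa using Real.hasDerivAt_exp 0
    have h1 := hd.tendsto_slope_zero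
    have hy : Tendsto (fun N : ℕ => -(ep N)) atTop (𝓝[≠] 0) := by
      rw [tendsto_nhdsWithin_iff]
      refine ⟨by simpa using ep_tendsto.neg, ?_⟩
      filter_upwards [ep_pos] with N hN
      simpa using hN.ne'
    refine (h1.comp hy).congr' ?_
    filter_upwards [ep_pos] with N hN
    simp only [Function.comp, zero_add, Real.exp_zero, smul_eq_mul]
    field_simp
    try ring
  have h2 := (hc.const_mul (8 * Real.pi * Real.sqrt m)).inv₀ (by positivity)
  have h3 := (Complex.continuous_ofReal.tendsto _).comp h2
  rw [mul_one, ← one_div, Complex.ofReal_div, Complex.ofReal_one] at h3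
  refine h3.congr' ?_
  filter_upwards [ep_pos, eventually_gt_atTop 0] with N hN hN'
  have hN0 : (0 : ℝ) < N := by exact_mod_cast hN'
  have hd : 0 < 1 - Real.exp (-(ep N)) := by
    have : Real.exp (-(ep N)) < 1 := by rw [Real.exp_lt_one_iff]; linarith
    linarith
  rw [← Complex.ofReal_neg, ← Complex.ofReal_exp, Real.exp_neg, qN_eq, Real.exp_log hd,
    ← Complex.ofReal_mul, ← Complex.ofReal_div]
  simp only [Function.comp]
  congr 1
  have hsN : 0 < Real.sqrt N := by positivity
  have hsm : 0 < Real.sqrt m := by positivity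
  rw [Real.sqrt_div hm.le]
  have hNN : (N : ℝ) = Real.sqrt N * Real.sqrt N := (Real.mul_self_sqrt hN0.le).symm
  have he : ep N * Real.sqrt N = 2 := by unfold ep; field_simp
  have h5 : 8 * Real.pi * Real.sqrt m * ((1 - Real.exp (-(ep N))) / ep N) =
      (1 - Real.exp (-(ep N))) * (4 * Real.pi * N * (Real.sqrt m / Real.sqrt N)) := by
    have : 4 * Real.pi * N * (Real.sqrt m / Real.sqrt N) = 4 * Real.pi * Real.sqrt N * Real.sqrt m := by
      nth_rw 1 [hNN]; field_simp
    rw [this]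
    field_simp
    linear_combination (-4) * he
  rw [h5, mul_inv, ← div_eq_mul_inv]

lemma algebra_aux (Q P K D a1 a2 a3 a4 a5 a6 a7 a8 b1 b2 b3 b4 b5 b6 b7 b8 b9
    h1 g2 g3 h4 g5 h6 g7 g8 k1 l2 k3 l4 k5 l6 l7 l8 l9 : ℂ) (hQ : Q ≠ 0) (hP : P ≠ 0)
    (hB : b1 * b2 * b3 * b4 * b5 * b6 * b7 * b8 * b9 ≠ 0)
    (hA : a1 * a2 * a3 * a4 * a5 * a6 * a7 * a8 = b1 * b2 * b3 * b4 * b5 * b6 * b7 * b8 * b9 * D) :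
    (Q * (P * a1 * h1) * (Q * a2 * g2) *
      ((Q * a3 * g3 * (P * a4 * h4)) * (Q * a5 * g5 * (P * a6 * h6))) * (Q * a7 * g7) * (Q * a8 * g8)) /
    (K * (P * b1 * k1) * ((Q * b2 * l2 * (P * b3 * k3)) * (Q * b4 * l4 * (P * b5 * k5))) *
      ((Q * b6 * l6 * (Q * b7 * l7)) * (Q * b8 * l8 * (Q * b9 * l9)))) =
    (h1 * h4 * h6 / (k1 * k3 * k5)) * (g2 * g3 * g5 * g7 * g8 / (l2 * l4 * l6 * l7 * l8 * l9)) * (D / K) := by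
  have hne : Q ^ 6 * P ^ 3 * (b1 * b2 * b3 * b4 * b5 * b6 * b7 * b8 * b9) ≠ 0 :=
    mul_ne_zero (mul_ne_zero (pow_ne_zero _ hQ) (pow_ne_zero _ hP)) hB
  rw [div_mul_div_comm, div_mul_div_comm, ← mul_div_mul_left (h1 * h4 * h6 * _ * D) _ hne]
  congr 1
  · linear_combination (Q ^ 6 * P ^ 3 * h1 * g2 * g3 * h4 * g5 * h6 * g7 * g8) * hA
  · ring

lemma tendsto_lim_eq {f : ℕ → ℂ} {a b : ℂ} (h : Tendsto f atTop (𝓝 a)) (e : a = b) :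
    Tendsto f atTop (𝓝 b) := e ▸ h


theorem statement3 (v w s t m ρ : ℝ) (hw : 0 < w) (hst : s < t) (hm : 0 < m) (hρ : 0 < ρ) :
    Tendsto (fun N : ℕ =>
      (qPochInf (Complex.ofReal (qN N)) (qN N) * qPochInf (-(qpow N (v + w + s))) (qN N) *
       qPochInf (qpow N (t - s)) (qN N) *
       ((qPochInf (qpow N (v + t / 2) * eI (Real.arccos (1 - ρ / (2 * (N : ℝ))))) (qN N) *
         qPochInf (-(qpow N (w + t / 2)) * eI (Real.arccos (1 - ρ / (2 * (N : ℝ))))) (qN N)) *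
        (qPochInf (qpow N (v + t / 2) * eI (-(Real.arccos (1 - ρ / (2 * (N : ℝ)))))) (qN N) *
         qPochInf (-(qpow N (w + t / 2)) * eI (-(Real.arccos (1 - ρ / (2 * (N : ℝ)))))) (qN N))) *
       qPochInf (eI (2 * Real.arccos (1 - m / (2 * (N : ℝ))))) (qN N) *
       qPochInf (eI (-2 * Real.arccos (1 - m / (2 * (N : ℝ))))) (qN N)) /
      (Complex.ofReal (4 * Real.pi * (N : ℝ)) * Complex.ofReal (Real.sqrt (m / (N : ℝ))) *
       qPochInf (-(qpow N (v + w + t))) (qN N) *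
       ((qPochInf (qpow N (v + s / 2) * eI (Real.arccos (1 - m / (2 * (N : ℝ))))) (qN N) *
         qPochInf (-(qpow N (w + s / 2)) * eI (Real.arccos (1 - m / (2 * (N : ℝ))))) (qN N)) *
        (qPochInf (qpow N (v + s / 2) * eI (-(Real.arccos (1 - m / (2 * (N : ℝ)))))) (qN N) *
         qPochInf (-(qpow N (w + s / 2)) * eI (-(Real.arccos (1 - m / (2 * (N : ℝ)))))) (qN N))) *
       ((qPochInf (qpow N ((t - s) / 2) *
           eI (Real.arccos (1 - ρ / (2 * (N : ℝ))) + Real.arccos (1 - m / (2 * (N : ℝ))))) (qN N) *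
         qPochInf (qpow N ((t - s) / 2) *
           eI (Real.arccos (1 - ρ / (2 * (N : ℝ))) - Real.arccos (1 - m / (2 * (N : ℝ))))) (qN N)) *
        (qPochInf (qpow N ((t - s) / 2) *
           eI (-(Real.arccos (1 - ρ / (2 * (N : ℝ))) + Real.arccos (1 - m / (2 * (N : ℝ)))))) (qN N) *
         qPochInf (qpow N ((t - s) / 2) *
           eI (-(Real.arccos (1 - ρ / (2 * (N : ℝ))) - Real.arccos (1 - m / (2 * (N : ℝ)))))) (qN N)))))
      atTop
      (nhds (GammaSq (v + s / 2) (Real.sqrt m / 2) *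
        GammaSq ((t - s) / 2) ((Real.sqrt ρ + Real.sqrt m) / 2) *
        GammaSq ((t - s) / 2) ((Real.sqrt ρ - Real.sqrt m) / 2) /
        (Complex.ofReal (8 * Real.pi * Real.sqrt m) * Complex.Gamma ((t - s : ℝ) : ℂ) *
         GammaSq (v + t / 2) (Real.sqrt ρ / 2) * GammaSq 0 (Real.sqrt m)))) := by
  have hmt := th_tendsto m hm
  have hrt := th_tendsto ρ hρ
  have hsm : 0 < Real.sqrt m := Real.sqrt_pos.2 hm
  have hsr : 0 < Real.sqrt ρ := Real.sqrt_pos.2 hρ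
  have hmt' : Tendsto (fun N => -(th m N) / ep N) atTop (𝓝 (-(Real.sqrt m / 2))) :=
    hmt.neg.congr fun N => by ring
  have hrt' : Tendsto (fun N => -(th ρ N) / ep N) atTop (𝓝 (-(Real.sqrt ρ / 2))) :=
    hrt.neg.congr fun N => by ring
  have h0t : Tendsto (fun N => (fun _ : ℕ => (0 : ℝ)) N / ep N) atTop (𝓝 0) := by simp
  have h2t : Tendsto (fun N => (2 * th m N) / ep N) atTop (𝓝 (Real.sqrt m)) := by
    have := hmt.const_mul 2
    rw [mul_div_cancel₀ _ two_ne_zero] at this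
    exact this.congr fun N => by ring
  have h2t' : Tendsto (fun N => (-2 * th m N) / ep N) atTop (𝓝 (-Real.sqrt m)) :=
    h2t.neg.congr fun N => by ring
  have hpt : Tendsto (fun N => (th ρ N + th m N) / ep N) atTop (𝓝 ((Real.sqrt ρ + Real.sqrt m) / 2)) := by
    rw [add_div]; exact (hrt.add hmt).congr fun N => by ring
  have hst' : Tendsto (fun N => (th ρ N - th m N) / ep N) atTop (𝓝 ((Real.sqrt ρ - Real.sqrt m) / 2)) := by
    rw [sub_div]; exact (hrt.sub hmt).congr fun N => by ring
  have hpt' : Tendsto (fun N => -(th ρ N + th m N) / ep N) atTop (𝓝 (-((Real.sqrt ρ + Real.sqrt m) / 2))) :=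
    hpt.neg.congr fun N => by ring
  have hst'' : Tendsto (fun N => -(th ρ N - th m N) / ep N) atTop (𝓝 (-((Real.sqrt ρ - Real.sqrt m) / 2))) :=
    hst'.neg.congr fun N => by ring
  have hts : 0 < t - s := by linarith
  have hts2 : 0 < (t - s) / 2 := by linarith
  have ner : Real.sqrt ρ / 2 ≠ 0 := by positivity
  have nem : Real.sqrt m / 2 ≠ 0 := by positivity
  obtain ⟨h1, h1t, h1e⟩ := lemB' (v + w + s) _ _ h0t
  obtain ⟨g2, g2t, g2e⟩ := lemA' (t - s) _ _ h0t (Or.inl hts)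
  obtain ⟨g3, g3t, g3e⟩ := lemA' (v + t / 2) _ _ hrt (Or.inr ner)
  obtain ⟨h4, h4t, h4e⟩ := lemB' (w + t / 2) _ _ hrt
  obtain ⟨g5, g5t, g5e⟩ := lemA' (v + t / 2) _ _ hrt' (Or.inr (neg_ne_zero.2 ner))
  obtain ⟨h6, h6t, h6e⟩ := lemB' (w + t / 2) _ _ hrt'
  obtain ⟨g7, g7t, g7e⟩ := lemA' 0 _ _ h2t (Or.inr hsm.ne')
  obtain ⟨g8, g8t, g8e⟩ := lemA' 0 _ _ h2t' (Or.inr (neg_ne_zero.2 hsm.ne'))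
  obtain ⟨k1, k1t, k1e⟩ := lemB' (v + w + t) _ _ h0t
  obtain ⟨l2, l2t, l2e⟩ := lemA' (v + s / 2) _ _ hmt (Or.inr nem)
  obtain ⟨k3, k3t, k3e⟩ := lemB' (w + s / 2) _ _ hmt
  obtain ⟨l4, l4t, l4e⟩ := lemA' (v + s / 2) _ _ hmt' (Or.inr (neg_ne_zero.2 nem))
  obtain ⟨k5, k5t, k5e⟩ := lemB' (w + s / 2) _ _ hmt'
  obtain ⟨l6, l6t, l6e⟩ := lemA' ((t - s) / 2) _ _ hpt (Or.inl hts2)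
  obtain ⟨l7, l7t, l7e⟩ := lemA' ((t - s) / 2) _ _ hst' (Or.inl hts2)
  obtain ⟨l8, l8t, l8e⟩ := lemA' ((t - s) / 2) _ _ hpt' (Or.inl hts2)
  obtain ⟨l9, l9t, l9e⟩ := lemA' ((t - s) / 2) _ _ hst'' (Or.inl hts2)
  have hGne : ∀ x y : ℝ, (0 < x ∨ y ≠ 0) → Complex.Gamma ((x : ℂ) - (y : ℂ) * Complex.I) ≠ 0 := by
    intro x y h
    apply Complex.Gamma_ne_zero
    intro n hn
    have h1 := congrArg Complex.re hn
    have h2 := congrArg Complex.im hn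
    simp at h1 h2
    rcases h with h | h
    · have : (0 : ℝ) ≤ n := Nat.cast_nonneg n
      linarith
    · exact h h2
  have n2 := hGne (v + s / 2) _ (Or.inr nem)
  have n4 := hGne (v + s / 2) _ (Or.inr (neg_ne_zero.2 nem))
  have n6 := hGne ((t - s) / 2) ((Real.sqrt ρ + Real.sqrt m) / 2) (Or.inl hts2)
  have n7 := hGne ((t - s) / 2) ((Real.sqrt ρ - Real.sqrt m) / 2) (Or.inl hts2)
  have n8 := hGne ((t - s) / 2) (-((Real.sqrt ρ + Real.sqrt m) / 2)) (Or.inl hts2)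
  have n9 := hGne ((t - s) / 2) (-((Real.sqrt ρ - Real.sqrt m) / 2)) (Or.inl hts2)
  have hL := (((h1t.mul h4t).mul h6t).div ((k1t.mul k3t).mul k5t) (by norm_num)).mul
    (((((g2t.mul g3t).mul g5t).mul g7t).mul g8t).div
      (((((l2t.mul l4t).mul l6t).mul l7t).mul l8t).mul l9t)
      (by simp only [ne_eq, mul_eq_zero, inv_eq_zero]; tauto)) |>.mul (const_tendsto m hm)
  refine tendsto_lim_eq (hL.congr' ?_) ?_
  swap
  · have hsq : ∀ a b : ℝ, GammaSq a b = Complex.Gamma ((a : ℂ) - ((-b : ℝ) : ℂ) * Complex.I) *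
        Complex.Gamma ((a : ℂ) - (b : ℂ) * Complex.I) := by
      intro a b; unfold GammaSq; congr 2; push_cast; ring
    have h00 : Complex.Gamma (((t - s : ℝ) : ℂ)) =
        Complex.Gamma ((((t - s : ℝ) : ℂ)) - ((0 : ℝ) : ℂ) * Complex.I) := by simp
    simp only [hsq]
    rw [h00]
    simp only [div_eq_mul_inv, mul_inv, inv_inv, one_mul, mul_one, inv_one]
    ring
  filter_upwards [h1e, g2e, g3e, h4e, g5e, h6e, g7e, g8e, k1e, l2e, k3e, l4e, k5e, l6e, l7e, l8e, l9e, ep_pos]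
    with N h1e g2e g3e h4e g5e h6e g7e g8e k1e l2e k3e l4e k5e l6e l7e l8e l9e hep
  have he0 : eI 0 = 1 := by simp [eI]
  have hq0 : qpow N 0 = 1 := by simp [qpow]
  simp only [he0, hq0, mul_one, one_mul] at h1e g2e k1e g7e g8e
  unfold th at *
  rw [h1e, g2e, g3e, h4e, g5e, h6e, g7e, g8e, k1e, l2e, k3e, l4e, k5e, l6e, l7e, l8e, l9e]
  have q0 : 0 < qN N := Real.exp_pos _
  have q1 : qN N < 1 := by rw [qN_eq, Real.exp_lt_one_iff]; linarith
  symm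
  apply algebra_aux
  · apply poch_ne_zero _ _ q0 q1
    intro k
    have : (1 : ℝ) - qN N * qN N ^ k ≠ 0 := by
      have := pow_lt_one₀ q0.le q1 (Nat.succ_ne_zero k)
      rw [pow_succ'] at this; linarith
    exact_mod_cast this
  · apply poch_ne_zero _ _ q0 q1
    intro k
    have : (1 : ℝ) - -(qN N) * qN N ^ k ≠ 0 := by
      have : 0 < qN N * qN N ^ k := by positivity
      linarith
    exact_mod_cast this
  · simp [Aexp, Bexp]
  · simp only [Aexp, Bexp, ← Complex.exp_add]
    congr 1
    push_cast
    ring
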